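/- arXiv:2410.01919 — 8 statements merged into one kernel-verified Lean document; each statement's English description precedes it below -/
import Mathlib

section
/- Let A be a real m×n matrix such that AᵀA is positive definite, and let R be a real symmetric positive semidefinite n×n matrix. Then AᵀA + R is positive definite (hence invertible) and the spectral radius of R(AᵀA + R)⁻¹ is strictly less than 1, i.e., every complex eigenvalue of R(AᵀA + R)⁻¹ has modulus strictly less than 1. -/
open Matrix

open scoped ComplexOrder MatrixOrder in
theorem posSemidef_map_ofReal {n : ℕ} {B : Matrix (Fin n) (Fin n) ℝ} (hB : B.PosSemidef) :
    (B.map Complex.ofReal).PosSemidef := by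
  obtain ⟨C, rfl⟩ := CStarAlgebra.nonneg_iff_eq_star_mul_self.mp hB.nonneg
  have h : (star C * C).map Complex.ofReal
      = (C.map Complex.ofReal)ᴴ * C.map Complex.ofReal := by
    ext i j
    simp [Matrix.mul_apply, star_eq_conjTranspose]
  rw [h]
  exact posSemidef_conjTranspose_mul_self _

open scoped ComplexOrder in
theorem posDef_map_ofReal {n : ℕ} {B : Matrix (Fin n) (Fin n) ℝ} (hB : B.PosDef) :
    (B.map Complex.ofReal).PosDef := by
  refine (posSemidef_map_ofReal hB.posSemidef).posDef_iff_isUnit.mpr ?_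
  exact hB.isUnit.map (Complex.ofRealHom.mapMatrix (m := Fin n))

open scoped ComplexOrder in
theorem norm_lt_one_aux {n : ℕ} {B R : Matrix (Fin n) (Fin n) ℝ}
    (hB : B.PosDef) (hR : R.PosSemidef) (z : ℂ)
    (hz : z ∈ spectrum ℂ ((R * (B + R)⁻¹).map Complex.ofReal)) : ‖z‖ < 1 := by
  have hS : (B + R).PosDef := hB.add_posSemidef hR
  have hMS : (R * (B + R)⁻¹).map Complex.ofReal * (B.map Complex.ofReal + R.map Complex.ofReal)
      = R.map Complex.ofReal := by
    have h : (R * (B + R)⁻¹) * (B + R) = R := by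
      rw [Matrix.mul_assoc, Matrix.nonsing_inv_mul _ ((isUnit_iff_isUnit_det _).mp hS.isUnit),
        Matrix.mul_one]
    have h2 := congrArg (Complex.ofRealHom.mapMatrix (m := Fin n)) h
    rw [map_mul, map_add] at h2
    exact h2
  rw [spectrum.mem_iff, isUnit_iff_isUnit_det, isUnit_iff_ne_zero, not_not] at hz
  have hdet : (z • (B.map Complex.ofReal + R.map Complex.ofReal) - R.map Complex.ofReal).det
      = 0 := by
    have : z • (B.map Complex.ofReal + R.map Complex.ofReal) - R.map Complex.ofReal
        = (algebraMap ℂ _ z - (R * (B + R)⁻¹).map Complex.ofReal)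
          * (B.map Complex.ofReal + R.map Complex.ofReal) := by
      rw [sub_mul, hMS, ← Algebra.smul_def]
    rw [this, det_mul, hz, zero_mul]
  obtain ⟨v, hv, hv0⟩ := exists_mulVec_eq_zero_iff.mpr hdet
  have hb := (posDef_map_ofReal hB).dotProduct_mulVec_pos hv
  have hr := (posSemidef_map_ofReal hR).dotProduct_mulVec_nonneg v
  have h := congrArg (fun w => star v ⬝ᵥ w) hv0
  simp only [sub_mulVec, smul_mulVec, add_mulVec, dotProduct_sub, dotProduct_smul,
    dotProduct_add, dotProduct_zero, smul_eq_mul] at h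
  generalize star v ⬝ᵥ (B.map Complex.ofReal) *ᵥ v = b at *
  generalize star v ⬝ᵥ (R.map Complex.ofReal) *ᵥ v = r at *
  lift b to ℝ using (Complex.pos_iff.mp hb).2.symm
  lift r to ℝ using (Complex.nonneg_iff.mp hr).2.symm
  have hb' : 0 < b := by exact_mod_cast hb
  have hr' : 0 ≤ r := by exact_mod_cast hr
  have hn := congrArg norm (sub_eq_zero.mp h)
  rw [norm_mul, ← Complex.ofReal_add, Complex.norm_real, Complex.norm_real,
    Real.norm_of_nonneg (by positivity), Real.norm_of_nonneg hr'] at hn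
  by_contra! hc
  nlinarith

/-- If `AᵀA` is positive definite and `R` is symmetric positive semidefinite, then
`AᵀA + R` is positive definite and the spectral radius of `R(AᵀA + R)⁻¹` is `< 1`,
i.e. every complex eigenvalue of `R(AᵀA + R)⁻¹` has modulus `< 1`. -/
theorem stmt_3 {m n : ℕ} (A : Matrix (Fin m) (Fin n) ℝ) (R : Matrix (Fin n) (Fin n) ℝ)
    (hA : (Aᵀ * A).PosDef) (hR : R.PosSemidef) :
    (Aᵀ * A + R).PosDef ∧
      spectralRadius ℂ ((R * (Aᵀ * A + R)⁻¹).map Complex.ofReal) < 1 ∧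
      ∀ z ∈ spectrum ℂ ((R * (Aᵀ * A + R)⁻¹).map Complex.ofReal), ‖z‖ < 1 := by
  refine ⟨hA.add_posSemidef hR, ?_, norm_lt_one_aux hA hR⟩
  have hfin := Matrix.finite_spectrum ((R * (Aᵀ * A + R)⁻¹).map Complex.ofReal)
  have h : spectralRadius ℂ ((R * (Aᵀ * A + R)⁻¹).map Complex.ofReal)
      = hfin.toFinset.sup (fun k => (‖k‖₊ : ENNReal)) := by
    rw [Finset.sup_eq_iSup]
    simp [spectralRadius]
  rw [h, Finset.sup_lt_iff (by simp)]
  intro z hz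
  have := norm_lt_one_aux hA hR z (hfin.mem_toFinset.mp hz)
  exact_mod_cast this
end

section
/- Let A be a real m×n matrix with AᵀA positive definite and R a real symmetric positive semidefinite n×n matrix, and suppose M := R(AᵀA + R)⁻¹ is symmetric. Let λ_min and λ_max denote the minimum and maximum eigenvalues of M (so 0 ≤ λ_min ≤ λ_max < 1). Then for every k ∈ ℕ the residual F := ∑_{i=k+1}^∞ Mⁱ converges and satisfies the Loewner-order bounds (1/(1 − λ_min))·M^{k+1} ⪯ F ⪯ (1/(1 − λ_max))·M^{k+1}. -/
open Matrix

/-- For `AᵀA` SPD, `R` PSD and `M := R(AᵀA + R)⁻¹` symmetric, the residual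
`F := ∑_{i=k+1}^∞ Mⁱ` converges and satisfies the Loewner bounds
`(1/(1 − λ_min)) M^{k+1} ⪯ F ⪯ (1/(1 − λ_max)) M^{k+1}`. -/
theorem stmt_7 {m n : ℕ} (hn : 0 < n) (A : Matrix (Fin m) (Fin n) ℝ)
    (R : Matrix (Fin n) (Fin n) ℝ) (hA : (Aᵀ * A).PosDef) (hR : R.PosSemidef)
    (M : Matrix (Fin n) (Fin n) ℝ) (hM : M = R * (Aᵀ * A + R)⁻¹)
    (hsym : M.IsHermitian) (k : ℕ) :
    Summable (fun i : ℕ => M ^ (i + (k + 1))) ∧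
    ((∑' i : ℕ, M ^ (i + (k + 1))) -
        (1 / (1 - ⨅ i, hsym.eigenvalues i)) • M ^ (k + 1)).PosSemidef ∧
    ((1 / (1 - ⨆ i, hsym.eigenvalues i)) • M ^ (k + 1) -
        ∑' i : ℕ, M ^ (i + (k + 1))).PosSemidef := by
  have : Nonempty (Fin n) := ⟨⟨0, hn⟩⟩
  have hS : (Aᵀ * A + R).PosDef := hA.add_posSemidef hR
  have hMS : M * (Aᵀ * A + R) = R := by
    rw [hM, Matrix.mul_assoc, Matrix.nonsing_inv_mul _ ((Matrix.isUnit_iff_isUnit_det _).1 hS.isUnit),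
      Matrix.mul_one]
  have hev : ∀ i, 0 ≤ hsym.eigenvalues i ∧ hsym.eigenvalues i < 1 := by
    intro i
    set v : Fin n → ℝ := ⇑(hsym.eigenvectorBasis i) with hv
    have hMv : M *ᵥ v = hsym.eigenvalues i • v := hsym.mulVec_eigenvectorBasis i
    have hv0 : v ≠ 0 := by
      intro h
      apply hsym.eigenvectorBasis.orthonormal.ne_zero i
      ext j
      exact congrFun h j
    have hMT : Mᵀ = M := by simpa [Matrix.IsHermitian, Matrix.conjTranspose_eq_transpose_of_trivial] using hsym
    have h1 : v ⬝ᵥ (R *ᵥ v) = hsym.eigenvalues i * (v ⬝ᵥ ((Aᵀ * A + R) *ᵥ v)) := by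
      conv_lhs => rw [← hMS]
      rw [← Matrix.mulVec_mulVec, Matrix.dotProduct_mulVec, ← Matrix.mulVec_transpose, hMT, hMv,
        smul_dotProduct, smul_eq_mul]
    have hR' : 0 ≤ v ⬝ᵥ (R *ᵥ v) := by simpa using hR.dotProduct_mulVec_nonneg v
    have hA' : 0 < v ⬝ᵥ ((Aᵀ * A) *ᵥ v) := by simpa using hA.dotProduct_mulVec_pos hv0
    rw [Matrix.add_mulVec, dotProduct_add] at h1
    generalize v ⬝ᵥ (R *ᵥ v) = r at *
    generalize v ⬝ᵥ ((Aᵀ * A) *ᵥ v) = a at *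
    generalize hsym.eigenvalues i = l at *
    constructor
    · by_contra! h
      nlinarith
    · by_contra! h
      nlinarith
  set e := hsym.eigenvalues with he
  set U : Matrix (Fin n) (Fin n) ℝ := (hsym.eigenvectorUnitary : Matrix (Fin n) (Fin n) ℝ) with hU
  have hUU : Uᴴ * U = 1 := by
    have := Unitary.coe_star_mul_self hsym.eigenvectorUnitary
    simpa [Matrix.star_eq_conjTranspose] using this
  have hUU' : U * Uᴴ = 1 := mul_eq_one_comm.1 hUU
  have hspec : M = U * diagonal e * Uᴴ := by
    have := hsym.spectral_theorem
    rw [Unitary.conjStarAlgAut_apply] at this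
    simpa [Matrix.star_eq_conjTranspose, Function.comp_def] using this
  have hpow : ∀ j : ℕ, M ^ j = U * diagonal (fun i => e i ^ j) * Uᴴ := by
    intro j
    induction j with
    | zero => simp only [pow_zero, diagonal_one, Matrix.mul_one, hUU']
    | succ j ih =>
      rw [pow_succ, ih]
      conv_lhs => rw [hspec]
      calc _ = U * diagonal (fun i => e i ^ j) * (Uᴴ * U) * diagonal e * Uᴴ := by
            simp only [Matrix.mul_assoc]
        _ = _ := by
            rw [hUU, Matrix.mul_one, Matrix.mul_assoc U, diagonal_mul_diagonal]
            simp only [pow_succ]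
  have hsum : HasSum (fun i : ℕ => M ^ (i + (k + 1)))
      (U * diagonal (fun i => (1 - e i)⁻¹ * e i ^ (k + 1)) * Uᴴ) := by
    simp only [hpow]
    refine HasSum.mul_right _ (HasSum.mul_left _ (HasSum.matrix_diagonal ?_))
    rw [Pi.hasSum]
    intro i
    simp only [pow_add _ _ (k + 1)]
    exact (hasSum_geometric_of_lt_one (hev i).1 (hev i).2).mul_right _
  have hpsd : ∀ d : Fin n → ℝ, (∀ i, 0 ≤ d i) → (U * diagonal d * Uᴴ).PosSemidef := by
    intro d hd
    exact (PosSemidef.diagonal hd).mul_mul_conjTranspose_same U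
  have hscal : ∀ c : ℝ, c • M ^ (k + 1) = U * diagonal (fun i => c * e i ^ (k + 1)) * Uᴴ := by
    intro c
    rw [hpow, ← Matrix.smul_mul, ← Matrix.mul_smul, ← diagonal_smul]
    rfl
  refine ⟨hsum.summable, ?_, ?_⟩
  · rw [hsum.tsum_eq, hscal, ← Matrix.sub_mul, ← Matrix.mul_sub, diagonal_sub]
    apply hpsd
    intro i
    have h1 : (⨅ i, e i) ≤ e i := ciInf_le (Set.finite_range e).bddBelow i
    have h2 := (hev i).2
    rw [← sub_mul, one_div]
    refine mul_nonneg (sub_nonneg.2 ?_) (pow_nonneg (hev i).1 _)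
    exact inv_anti₀ (by linarith) (by linarith)
  · rw [hsum.tsum_eq, hscal, ← Matrix.sub_mul, ← Matrix.mul_sub, diagonal_sub]
    apply hpsd
    intro i
    have h1 : e i ≤ ⨆ i, e i := le_ciSup (Set.finite_range e).bddAbove i
    have h2 : (⨆ i, e i) < 1 := by
      obtain ⟨j, hj⟩ := exists_eq_ciSup_of_finite (f := e)
      rw [← hj]
      exact (hev j).2
    rw [← sub_mul, one_div]
    refine mul_nonneg (sub_nonneg.2 ?_) (pow_nonneg (hev i).1 _)
    exact inv_anti₀ (by linarith) (by linarith)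
end

section
/- Let AᵀA = P·diag(λ₁, …, λₙ)·P⁻¹ with P a real orthogonal n×n matrix and eigenvalues λ₁ ≥ λ₂ ≥ … ≥ λₙ > 0. Let s with 1 ≤ s ≤ n−1 and μ ∈ ℝ satisfy λ_{s+1} ≤ μ² ≤ λ_s, and define the regularization matrix R := P·diag(max{μ² − λ₁, 0}, …, max{μ² − λₙ, 0})·P⁻¹. Then: (i) AᵀA + R = P·diag(λ₁, …, λ_s, μ², …, μ²)·P⁻¹ (the eigenvalues λ_{s+1}, …, λₙ are all replaced by μ²); (ii) AᵀA + R is positive definite; and (iii) the spectral radius of R(AᵀA + R)⁻¹ is strictly less than 1. -/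
open Matrix

/-- Relaxation of the regularization matrix.  Let `AᵀA = P diag(λ) P⁻¹` with `P`
orthogonal and `λ₁ ≥ ⋯ ≥ λₙ > 0`, let `s` (0-based index) and `μ` satisfy
`λ_{s+1} ≤ μ² ≤ λ_s`, and let `R := P diag(max{μ² − λᵢ, 0}) P⁻¹`.  Then
`AᵀA + R = P diag(λ₁, …, λ_s, μ², …, μ²) P⁻¹`, `AᵀA + R` is positive definite, and the
spectral radius of `R(AᵀA + R)⁻¹` is `< 1`. -/
theorem stmt_8 {m n : ℕ} (A : Matrix (Fin m) (Fin n) ℝ) (P : Matrix (Fin n) (Fin n) ℝ)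
    (hP : Pᵀ * P = 1) (lam : Fin n → ℝ)
    (hdec : ∀ i j : Fin n, i ≤ j → lam j ≤ lam i) (hpos : ∀ i, 0 < lam i)
    (hATA : Aᵀ * A = P * Matrix.diagonal lam * P⁻¹)
    (s : Fin n) (hs : (s : ℕ) + 1 < n) (μ : ℝ)
    (hlo : lam ⟨(s : ℕ) + 1, hs⟩ ≤ μ ^ 2) (hhi : μ ^ 2 ≤ lam s)
    (R : Matrix (Fin n) (Fin n) ℝ)
    (hR : R = P * Matrix.diagonal (fun i => max (μ ^ 2 - lam i) 0) * P⁻¹) :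
    Aᵀ * A + R = P * Matrix.diagonal (fun i => if i ≤ s then lam i else μ ^ 2) * P⁻¹ ∧
    (Aᵀ * A + R).PosDef ∧
    spectralRadius ℂ ((R * (Aᵀ * A + R)⁻¹).map Complex.ofReal) < 1 := by
  have hPinv : P⁻¹ = Pᵀ := Matrix.inv_eq_left_inv hP
  have hP2 : P * Pᵀ = 1 := mul_eq_one_comm.mp hP
  have h1 : Aᵀ * A + R
      = P * Matrix.diagonal (fun i => if i ≤ s then lam i else μ ^ 2) * P⁻¹ := by
    rw [hATA, hR, ← add_mul, ← mul_add, Matrix.diagonal_add]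
    congr 3
    funext i
    split_ifs with h
    · rw [max_eq_right (by linarith [hdec i s h])]; ring
    · have h3 : (⟨(s : ℕ) + 1, hs⟩ : Fin n) ≤ i := by
        rw [Fin.le_def]
        have := Fin.lt_def.mp (not_le.mp h)
        simpa using this
      rw [max_eq_left (by linarith [hdec _ i h3])]; ring
  have hmu : 0 < μ ^ 2 := lt_of_lt_of_le (hpos _) hlo
  have he : ∀ i, 0 < (if i ≤ s then lam i else μ ^ 2) := by
    intro i
    split_ifs
    · exact hpos i
    · exact hmu
  have hlt : ∀ i, max (μ ^ 2 - lam i) 0 < (if i ≤ s then lam i else μ ^ 2) := by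
    intro i
    split_ifs with h
    · rw [max_eq_right (by linarith [hdec i s h])]; exact hpos i
    · exact max_lt (by linarith [hpos i]) hmu
  refine ⟨h1, ?_, ?_⟩
  · rw [h1, hPinv]
    have hd := Matrix.PosDef.diagonal he
    have hinj : Function.Injective P.vecMul := by
      intro x y hxy
      have := congrArg (fun v => v ᵥ* Pᵀ) hxy
      simpa [Matrix.vecMul_vecMul, hP2] using this
    simpa [Matrix.conjTranspose_eq_transpose_of_trivial] using
      hd.mul_mul_conjTranspose_same hinj
  · rw [h1, hR]
    generalize hed : (fun i => if i ≤ s then lam i else μ ^ 2) = e at *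
    have he' : ∀ i, 0 < e i := by intro i; rw [← hed]; exact he i
    have hlt' : ∀ i, max (μ ^ 2 - lam i) 0 < e i := by intro i; rw [← hed]; exact hlt i
    have hinv : (P * Matrix.diagonal e * P⁻¹)⁻¹
        = P * Matrix.diagonal (fun i => (e i)⁻¹) * P⁻¹ := by
      apply Matrix.inv_eq_left_inv
      rw [hPinv]
      calc P * Matrix.diagonal (fun i => (e i)⁻¹) * Pᵀ * (P * Matrix.diagonal e * Pᵀ)
          = P * Matrix.diagonal (fun i => (e i)⁻¹) * (Pᵀ * P) * Matrix.diagonal e * Pᵀ := by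
            simp only [Matrix.mul_assoc]
        _ = P * (Matrix.diagonal (fun i => (e i)⁻¹) * Matrix.diagonal e) * Pᵀ := by
            rw [hP]; simp only [Matrix.mul_assoc, Matrix.one_mul]
        _ = 1 := by
            rw [Matrix.diagonal_mul_diagonal]
            have : (fun i => (e i)⁻¹ * e i) = fun _ => (1 : ℝ) := by
              funext i; exact inv_mul_cancel₀ (he' i).ne'
            rw [this, Matrix.diagonal_one, Matrix.mul_one, hP2]
    set d : Fin n → ℝ := fun i => max (μ ^ 2 - lam i) 0 * (e i)⁻¹ with hd
    have hprod : P * Matrix.diagonal (fun i => max (μ ^ 2 - lam i) 0) * P⁻¹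
        * (P * Matrix.diagonal e * P⁻¹)⁻¹ = P * Matrix.diagonal d * Pᵀ := by
      rw [hinv, hPinv]
      calc _ = P * Matrix.diagonal (fun i => max (μ ^ 2 - lam i) 0) * (Pᵀ * P)
            * Matrix.diagonal (fun i => (e i)⁻¹) * Pᵀ := by
            simp only [Matrix.mul_assoc]
        _ = P * (Matrix.diagonal (fun i => max (μ ^ 2 - lam i) 0)
            * Matrix.diagonal (fun i => (e i)⁻¹)) * Pᵀ := by
            rw [hP]; simp only [Matrix.mul_assoc, Matrix.one_mul]
        _ = _ := by rw [Matrix.diagonal_mul_diagonal]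
    rw [hprod]
    let f : Matrix (Fin n) (Fin n) ℝ →+* Matrix (Fin n) (Fin n) ℂ :=
      Complex.ofRealHom.mapMatrix
    let U : (Matrix (Fin n) (Fin n) ℂ)ˣ :=
      ⟨f P, f Pᵀ, by rw [← map_mul, hP2, map_one], by rw [← map_mul, hP, map_one]⟩
    have hfd : f (Matrix.diagonal d) = Matrix.diagonal (fun i => (d i : ℂ)) := by
      simp [f, Matrix.diagonal_map, Function.comp_def]
    have hmap : (P * Matrix.diagonal d * Pᵀ).map Complex.ofReal
        = (U : Matrix (Fin n) (Fin n) ℂ) * Matrix.diagonal (fun i => (d i : ℂ))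
          * ((U⁻¹ : (Matrix (Fin n) (Fin n) ℂ)ˣ) : Matrix (Fin n) (Fin n) ℂ) := by
      change f (P * Matrix.diagonal d * Pᵀ) = f P * _ * f Pᵀ
      rw [map_mul, map_mul, hfd]
    rw [hmap, spectralRadius, spectrum.units_conjugate, _root_.spectrum_diagonal,
      iSup_range]
    have hfin : Finset.univ.sup (fun i => (‖(d i : ℂ)‖₊ : ENNReal)) < 1 := by
      rw [Finset.sup_lt_iff (by simp)]
      intro i _
      have h0 : 0 ≤ d i := mul_nonneg (le_max_right _ _) (inv_nonneg.mpr (he' i).le)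
      have h1 : d i < 1 := by
        rw [hd]
        exact (mul_inv_lt_iff₀ (he' i)).mpr (by simpa using hlt' i)
      rw [ENNReal.coe_lt_one_iff, ← NNReal.coe_lt_coe, coe_nnnorm, Complex.norm_real,
        Real.norm_of_nonneg h0]
      exact h1
    rwa [Finset.sup_univ_eq_iSup] at hfin
end

section
/- Let AᵀA = P·diag(λ₁, …, λₙ)·P⁻¹ with P a real orthogonal n×n matrix and λ₁ ≥ … ≥ λₙ > 0, with λ₁ > λ_s for some 1 ≤ s ≤ n−1, and let R := P·diag(max{λ_s − λ₁, 0}, …, max{λ_s − λₙ, 0})·P⁻¹ (the relaxed regularization matrix with μ² = λ_s). Then the spectral condition number of AᵀA + R with respect to the spectral norm equals λ₁/λ_s, i.e., ‖AᵀA + R‖₂·‖(AᵀA + R)⁻¹‖₂ = λ₁/λ_s, which is at most the condition number λ₁/λₙ of AᵀA. -/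
open Matrix

open scoped Matrix.Norms.L2Operator in
lemma norm_conj_diag {n : ℕ} (P : Matrix (Fin n) (Fin n) ℝ) (hP : Pᵀ * P = 1) (d : Fin n → ℝ) :
    ‖Matrix.toEuclideanCLM (𝕜 := ℝ) (P * Matrix.diagonal d * P⁻¹)‖ = ‖d‖ := by
  have hinv : P⁻¹ = Pᵀ := Matrix.inv_eq_left_inv hP
  have hP2 : P * Pᵀ = 1 := mul_eq_one_comm.mp hP
  have hs : star P = Pᵀ := by
    rw [Matrix.star_eq_conjTranspose, Matrix.conjTranspose_eq_transpose_of_trivial]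
  have hu : P ∈ unitary (Matrix (Fin n) (Fin n) ℝ) := by
    rw [Unitary.mem_iff, hs]
    exact ⟨hP, hP2⟩
  have hu2 : Pᵀ ∈ unitary (Matrix (Fin n) (Fin n) ℝ) := hs ▸ Unitary.star_mem hu
  rw [Matrix.l2_opNorm_toEuclideanCLM, hinv, CStarRing.norm_mul_mem_unitary _ hu2,
    CStarRing.norm_mem_unitary_mul _ hu, Matrix.l2_opNorm_diagonal]

lemma pi_norm_eq_of_max {n : ℕ} (d : Fin n → ℝ) (i : Fin n) (h0 : ∀ j, 0 ≤ d j)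
    (h : ∀ j, d j ≤ d i) : ‖d‖ = d i := by
  apply le_antisymm
  · rw [pi_norm_le_iff_of_nonneg (h0 i)]
    intro j
    rw [Real.norm_of_nonneg (h0 j)]
    exact h j
  · have := norm_le_pi_norm d i
    rwa [Real.norm_of_nonneg (h0 i)] at this

/-- Let `AᵀA = P diag(λ) P⁻¹` with `P` orthogonal, `λ₁ ≥ ⋯ ≥ λₙ > 0` and `λ₁ > λ_s`,
and let `R` be the relaxed regularization matrix with `μ² = λ_s`.  Then the spectral
condition number of `AᵀA + R` equals `λ₁/λ_s`, which is at most the condition number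
`λ₁/λₙ` of `AᵀA`. -/
theorem stmt_9 {m n : ℕ} (A : Matrix (Fin m) (Fin n) ℝ) (P : Matrix (Fin n) (Fin n) ℝ)
    (hP : Pᵀ * P = 1) (lam : Fin n → ℝ)
    (hdec : ∀ i j : Fin n, i ≤ j → lam j ≤ lam i) (hpos : ∀ i, 0 < lam i)
    (hATA : Aᵀ * A = P * Matrix.diagonal lam * P⁻¹)
    (s : Fin n) (hs : (s : ℕ) + 1 < n)
    (hgt : lam s < lam ⟨0, s.pos⟩)
    (R : Matrix (Fin n) (Fin n) ℝ)
    (hR : R = P * Matrix.diagonal (fun i => max (lam s - lam i) 0) * P⁻¹) :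
    ‖Matrix.toEuclideanCLM (𝕜 := ℝ) (Aᵀ * A + R)‖ *
        ‖Matrix.toEuclideanCLM (𝕜 := ℝ) ((Aᵀ * A + R)⁻¹)‖ = lam ⟨0, s.pos⟩ / lam s ∧
    lam ⟨0, s.pos⟩ / lam s ≤
        lam ⟨0, s.pos⟩ / lam ⟨n - 1, Nat.sub_lt s.pos Nat.one_pos⟩ := by
  have hM : Aᵀ * A + R = P * Matrix.diagonal (fun i => max (lam s) (lam i)) * P⁻¹ := by
    rw [hATA, hR, ← add_mul, ← mul_add, Matrix.diagonal_add]
    congr 3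
    funext i
    rw [← max_add_add_left]
    simp
  have hmp : ∀ i, 0 < max (lam s) (lam i) := fun i => lt_max_of_lt_left (hpos s)
  have hPP : P⁻¹ * P = 1 := by rw [Matrix.inv_eq_left_inv hP, hP]
  have hPP2 : P * P⁻¹ = 1 := mul_eq_one_comm.mp hPP
  have hMi : (Aᵀ * A + R)⁻¹ =
      P * Matrix.diagonal (fun i => (max (lam s) (lam i))⁻¹) * P⁻¹ := by
    apply Matrix.inv_eq_left_inv
    rw [hM]
    calc _ = P * Matrix.diagonal (fun i => (max (lam s) (lam i))⁻¹) * (P⁻¹ * P) *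
          Matrix.diagonal (fun i => max (lam s) (lam i)) * P⁻¹ := by simp only [mul_assoc]
      _ = P * (Matrix.diagonal (fun i => (max (lam s) (lam i))⁻¹) *
          Matrix.diagonal (fun i => max (lam s) (lam i))) * P⁻¹ := by
            rw [hPP, mul_one]; simp only [mul_assoc]
      _ = 1 := by
        rw [Matrix.diagonal_mul_diagonal]
        have : (fun i => (max (lam s) (lam i))⁻¹ * max (lam s) (lam i)) = fun _ => (1 : ℝ) :=
          funext fun i => inv_mul_cancel₀ (hmp i).ne'
        rw [this, Matrix.diagonal_one, mul_one, hPP2]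
  have hle : ∀ j, lam j ≤ lam ⟨0, s.pos⟩ := fun j => hdec _ _ (Fin.mk_le_of_le_val (Nat.zero_le _))
  constructor
  · rw [hMi, hM, norm_conj_diag P hP, norm_conj_diag P hP,
      pi_norm_eq_of_max _ ⟨0, s.pos⟩ (fun j => (hmp j).le)
        (fun j => (max_le hgt.le (hle j)).trans (le_max_right _ _)),
      pi_norm_eq_of_max _ s (fun j => (inv_pos.mpr (hmp j)).le) (fun j => by
        simp only [max_self]
        exact inv_anti₀ (hpos s) (le_max_left _ _)),
      max_self, max_eq_right hgt.le, div_eq_mul_inv]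
  · apply div_le_div_of_nonneg_left (hpos _).le (hpos _)
    apply hdec
    rw [Fin.le_def]
    exact Nat.le_sub_one_of_lt s.isLt
end

section
/- Let λ₁ ≥ λ_{n−1} ≥ λₙ > 0 be real numbers. The function f(t) := (t − λₙ)²/(λₙ·t) + λ₁/t attains a unique minimum on the interval [λₙ, λ_{n−1}] at the point t* = min{√(λₙ² + λₙλ₁), λ_{n−1}}. -/
/-- For `λ₁ ≥ λ_{n−1} ≥ λₙ > 0`, the loss `f(t) = (t − λₙ)²/(λₙ t) + λ₁/t` attains a
unique minimum on `[λₙ, λ_{n−1}]` at `t* = min{√(λₙ² + λₙλ₁), λ_{n−1}}`. -/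
theorem stmt_11 (lam1 lam2 lamn : ℝ) (h1 : lam2 ≤ lam1) (h2 : lamn ≤ lam2) (h3 : 0 < lamn) :
    min (Real.sqrt (lamn ^ 2 + lamn * lam1)) lam2 ∈ Set.Icc lamn lam2 ∧
    ∀ t ∈ Set.Icc lamn lam2, t ≠ min (Real.sqrt (lamn ^ 2 + lamn * lam1)) lam2 →
      (min (Real.sqrt (lamn ^ 2 + lamn * lam1)) lam2 - lamn) ^ 2 /
          (lamn * min (Real.sqrt (lamn ^ 2 + lamn * lam1)) lam2) +
        lam1 / min (Real.sqrt (lamn ^ 2 + lamn * lam1)) lam2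
      < (t - lamn) ^ 2 / (lamn * t) + lam1 / t := by
  have hc : 0 < lamn ^ 2 + lamn * lam1 := by nlinarith
  have hs0 : 0 < Real.sqrt (lamn ^ 2 + lamn * lam1) := Real.sqrt_pos.mpr hc
  have hsq : Real.sqrt (lamn ^ 2 + lamn * lam1) ^ 2 = lamn ^ 2 + lamn * lam1 :=
    Real.sq_sqrt hc.le
  have hsn : lamn ≤ Real.sqrt (lamn ^ 2 + lamn * lam1) := by
    apply Real.le_sqrt_of_sq_le
    nlinarith
  generalize Real.sqrt (lamn ^ 2 + lamn * lam1) = s at *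
  refine ⟨⟨le_min hsn h2, min_le_right _ _⟩, ?_⟩
  rintro t ⟨ht1, ht2⟩ hne
  have ht0 : 0 < t := by linarith
  have hm0 : 0 < min s lam2 := lt_min hs0 (by linarith)
  have key : 0 < (t - min s lam2) * (t * min s lam2 - s ^ 2) := by
    rcases le_total s lam2 with h | h
    · rw [min_eq_left h] at hne ⊢
      have h4 : 0 < (t - s) ^ 2 := by
        have := sub_ne_zero.mpr hne
        positivity
      have h5 : (t - s) * (t * s - s ^ 2) = s * (t - s) ^ 2 := by ring
      rw [h5]
      positivity
    · rw [min_eq_right h] at hne ⊢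
      have h4 : t < lam2 := lt_of_le_of_ne ht2 hne
      apply mul_pos_of_neg_of_neg
      · linarith
      · nlinarith
  generalize min s lam2 = m at *
  rw [← sub_pos]
  have h6 : (t - lamn) ^ 2 / (lamn * t) + lam1 / t - ((m - lamn) ^ 2 / (lamn * m) + lam1 / m)
      = (t - m) * (t * m - s ^ 2) / (lamn * t * m) := by
    rw [hsq]
    field_simp
    ring
  rw [h6]
  positivity
end

section
/- Let A be a real m×n matrix and R a real n×n matrix such that AᵀA, AᵀA + R, and I + R(AᵀA)⁻¹ are all invertible. Then (AᵀA)⁻¹ − (AᵀA + R)⁻¹ − (AᵀA + R)⁻¹R(AᵀA + R)⁻¹ = (AᵀA + R)⁻¹·((I + R(AᵀA)⁻¹)⁻¹ − I + R(AᵀA)⁻¹). Consequently, for any b ∈ ℝᵐ, the difference between the least squares solution x̂_ls = (AᵀA)⁻¹Aᵀb and the first-order regularization solution x̂¹ = (AᵀA + R)⁻¹Aᵀb + (AᵀA + R)⁻¹R(AᵀA + R)⁻¹Aᵀb equals (AᵀA + R)⁻¹((I + R(AᵀA)⁻¹)⁻¹ − I + R(AᵀA)⁻¹)Aᵀb. 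-/
open Matrix

/-- If `AᵀA`, `AᵀA + R` and `I + R(AᵀA)⁻¹` are invertible, then
`(AᵀA)⁻¹ − (AᵀA + R)⁻¹ − (AᵀA + R)⁻¹R(AᵀA + R)⁻¹
  = (AᵀA + R)⁻¹((I + R(AᵀA)⁻¹)⁻¹ − I + R(AᵀA)⁻¹)`, and consequently for every `b`
the difference between the LS solution and the first-order regularization solution
equals `(AᵀA + R)⁻¹((I + R(AᵀA)⁻¹)⁻¹ − I + R(AᵀA)⁻¹)Aᵀb`. -/
theorem stmt_14 {m n : ℕ} (A : Matrix (Fin m) (Fin n) ℝ) (R : Matrix (Fin n) (Fin n) ℝ)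
    (h1 : IsUnit (Aᵀ * A)) (h2 : IsUnit (Aᵀ * A + R)) (h3 : IsUnit (1 + R * (Aᵀ * A)⁻¹)) :
    (Aᵀ * A)⁻¹ - (Aᵀ * A + R)⁻¹ - (Aᵀ * A + R)⁻¹ * R * (Aᵀ * A + R)⁻¹
      = (Aᵀ * A + R)⁻¹ * ((1 + R * (Aᵀ * A)⁻¹)⁻¹ - 1 + R * (Aᵀ * A)⁻¹) ∧
    ∀ b : Fin m → ℝ,
      (Aᵀ * A)⁻¹ *ᵥ (Aᵀ *ᵥ b) -
          ((Aᵀ * A + R)⁻¹ *ᵥ (Aᵀ *ᵥ b) +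
            ((Aᵀ * A + R)⁻¹ * R * (Aᵀ * A + R)⁻¹) *ᵥ (Aᵀ *ᵥ b))
        = ((Aᵀ * A + R)⁻¹ * ((1 + R * (Aᵀ * A)⁻¹)⁻¹ - 1 + R * (Aᵀ * A)⁻¹)) *ᵥ (Aᵀ *ᵥ b) := by
  have key : (Aᵀ * A)⁻¹ - (Aᵀ * A + R)⁻¹ - (Aᵀ * A + R)⁻¹ * R * (Aᵀ * A + R)⁻¹
      = (Aᵀ * A + R)⁻¹ * ((1 + R * (Aᵀ * A)⁻¹)⁻¹ - 1 + R * (Aᵀ * A)⁻¹) := by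
    generalize Aᵀ * A = N at *
    have d1 : IsUnit N.det := (Matrix.isUnit_iff_isUnit_det _).1 h1
    have d2 : IsUnit (N + R).det := (Matrix.isUnit_iff_isUnit_det _).1 h2
    have hN : N * N⁻¹ = 1 := Matrix.mul_nonsing_inv _ d1
    have hN' : N⁻¹ * N = 1 := Matrix.nonsing_inv_mul _ d1
    have hM : (N + R) * (N + R)⁻¹ = 1 := Matrix.mul_nonsing_inv _ d2
    have hM' : (N + R)⁻¹ * (N + R) = 1 := Matrix.nonsing_inv_mul _ d2
    have e0 : 1 + R * N⁻¹ = (N + R) * N⁻¹ := by rw [add_mul, hN]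
    have e1 : (1 + R * N⁻¹)⁻¹ = 1 - R * (N + R)⁻¹ := by
      rw [e0, Matrix.mul_inv_rev, Matrix.nonsing_inv_nonsing_inv _ d1, eq_sub_iff_add_eq,
        ← add_mul, hM]
    have e2 : N⁻¹ = (N + R)⁻¹ + (N + R)⁻¹ * (R * N⁻¹) := by
      calc N⁻¹ = (N + R)⁻¹ * (N + R) * N⁻¹ := by rw [hM', one_mul]
        _ = (N + R)⁻¹ * (1 + R * N⁻¹) := by rw [e0, mul_assoc]
        _ = _ := by rw [mul_add, mul_one]
    rw [e1, mul_add, mul_sub, mul_sub, mul_one, mul_assoc]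
    nth_rewrite 1 [e2]
    abel
  refine ⟨key, fun b => ?_⟩
  rw [← key, Matrix.sub_mulVec, Matrix.sub_mulVec, sub_sub]
end

section
/- Let A be a real m×n matrix and R a real n×n matrix such that AᵀA and AᵀA + R are invertible and the spectral radius of M := R(AᵀA + R)⁻¹ is strictly less than 1. Then for every k ∈ ℕ and every b ∈ ℝᵐ, the difference between the least squares solution x̂_ls = (AᵀA)⁻¹Aᵀb and the kth-order regularization solution x̂ᵏ = (AᵀA + R)⁻¹·∑_{i=0}^k Mⁱ·Aᵀb equals (AᵀA + R)⁻¹·(∑_{i=k+1}^∞ Mⁱ)·Aᵀb; in particular ‖x̂_ls − x̂ᵏ‖ ≤ ‖(AᵀA + R)⁻¹·(∑_{i=k+1}^∞ Mⁱ)·Aᵀb‖. -/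
open Matrix

section aux
attribute [local instance] Matrix.linftyOpNormedRing Matrix.linftyOpNormedAlgebra

lemma aux_entry_le {n : ℕ} (X : Matrix (Fin n) (Fin n) ℂ) (i j : Fin n) : ‖X i j‖ ≤ ‖X‖ := by
  rw [Matrix.linfty_opNorm_def]
  have h1 : ‖X i j‖₊ ≤ ∑ j, ‖X i j‖₊ :=
    Finset.single_le_sum (f := fun j => ‖X i j‖₊) (fun _ _ => zero_le) (Finset.mem_univ j)
  have h2 : ∑ j, ‖X i j‖₊ ≤ Finset.univ.sup fun i => ∑ j, ‖X i j‖₊ :=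
    Finset.le_sup (f := fun i => ∑ j, ‖X i j‖₊) (Finset.mem_univ i)
  exact_mod_cast h1.trans h2

lemma aux_summable_norm {n : ℕ} (X : Matrix (Fin n) (Fin n) ℂ)
    (hρ : spectralRadius ℂ X < 1) : Summable (fun i : ℕ => ‖X ^ i‖) := by
  haveI : CompleteSpace (Matrix (Fin n) (Fin n) ℂ) := FiniteDimensional.complete ℂ _
  have hG := spectrum.pow_nnnorm_pow_one_div_tendsto_nhds_spectralRadius X
  obtain ⟨r, hr1, hr2⟩ := ENNReal.lt_iff_exists_nnreal_btwn.1 hρ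
  have hr2' : r < 1 := by exact_mod_cast hr2
  have hev := hG.eventually (gt_mem_nhds hr1)
  have hs : Summable (fun i : ℕ => (r : ℝ) ^ i) :=
    summable_geometric_of_lt_one r.2 (by exact_mod_cast hr2')
  refine hs.of_norm_bounded_eventually_nat ?_
  filter_upwards [hev, Filter.eventually_gt_atTop 0] with i hi hi0
  have h3 : (‖X ^ i‖₊ : ENNReal) ≤ (r : ENNReal) ^ i := by
    have h4 := ENNReal.rpow_le_rpow hi.le (Nat.cast_nonneg (α := ℝ) i)
    rw [← ENNReal.rpow_mul, one_div, inv_mul_cancel₀ (by exact_mod_cast hi0.ne'),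
      ENNReal.rpow_one, ENNReal.rpow_natCast] at h4
    exact h4
  rw [norm_norm]
  have h5 : ‖X ^ i‖₊ ≤ r ^ i := by exact_mod_cast h3
  exact_mod_cast h5

lemma aux_entries {n : ℕ} (X : Matrix (Fin n) (Fin n) ℂ)
    (hρ : spectralRadius ℂ X < 1) (i j : Fin n) : Summable (fun l : ℕ => ‖(X ^ l) i j‖) :=
  (aux_summable_norm X hρ).of_nonneg_of_le (fun _ => norm_nonneg _) (fun _ => aux_entry_le _ _ _)

end aux

lemma aux_summable {n : ℕ} (M : Matrix (Fin n) (Fin n) ℝ)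
    (hρ : spectralRadius ℂ (M.map Complex.ofReal) < 1) : Summable (fun i : ℕ => M ^ i) := by
  refine Pi.summable.2 fun i => Pi.summable.2 fun j => ?_
  refine Summable.of_norm ?_
  refine (aux_entries _ hρ i j).congr fun l => ?_
  have h : (M.map Complex.ofReal) ^ l = (M ^ l).map Complex.ofReal :=
    (map_pow (Complex.ofRealHom.mapMatrix) M l).symm
  rw [h, Matrix.map_apply, Complex.norm_real]

/-- With `AᵀA` and `AᵀA + R` invertible and the spectral radius of `M := R(AᵀA + R)⁻¹`
less than 1, the bias between the LS solution `x̂_ls = (AᵀA)⁻¹Aᵀb` and the `k`-th order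
regularization solution `x̂ᵏ = (AᵀA + R)⁻¹ ∑_{i=0}^k Mⁱ Aᵀb` equals
`(AᵀA + R)⁻¹ (∑_{i=k+1}^∞ Mⁱ) Aᵀb`; in particular the Euclidean norm of the bias is
bounded by the norm of that vector. -/
theorem stmt_15 {m n : ℕ} (A : Matrix (Fin m) (Fin n) ℝ) (R : Matrix (Fin n) (Fin n) ℝ)
    (h1 : IsUnit (Aᵀ * A)) (h2 : IsUnit (Aᵀ * A + R))
    (M : Matrix (Fin n) (Fin n) ℝ) (hM : M = R * (Aᵀ * A + R)⁻¹)
    (hρ : spectralRadius ℂ (M.map Complex.ofReal) < 1) (k : ℕ) (b : Fin m → ℝ) :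
    Summable (fun i : ℕ => M ^ (i + (k + 1))) ∧
    (Aᵀ * A)⁻¹ *ᵥ (Aᵀ *ᵥ b) -
        ((Aᵀ * A + R)⁻¹ * ∑ i ∈ Finset.range (k + 1), M ^ i) *ᵥ (Aᵀ *ᵥ b)
      = ((Aᵀ * A + R)⁻¹ * ∑' i : ℕ, M ^ (i + (k + 1))) *ᵥ (Aᵀ *ᵥ b) ∧
    ‖(WithLp.equiv 2 (Fin n → ℝ)).symm ((Aᵀ * A)⁻¹ *ᵥ (Aᵀ *ᵥ b) -
        ((Aᵀ * A + R)⁻¹ * ∑ i ∈ Finset.range (k + 1), M ^ i) *ᵥ (Aᵀ *ᵥ b))‖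
      ≤ ‖(WithLp.equiv 2 (Fin n → ℝ)).symm
          (((Aᵀ * A + R)⁻¹ * ∑' i : ℕ, M ^ (i + (k + 1))) *ᵥ (Aᵀ *ᵥ b))‖ := by
  have hs := aux_summable M hρ
  have hs' : Summable (fun i : ℕ => M ^ (i + (k + 1))) := (summable_nat_add_iff (k + 1)).2 hs
  have hsum := hs.sum_add_tsum_nat_add (k + 1)
  have hT : (1 - M) * ∑' i : ℕ, M ^ i = 1 := by
    have h0 := hs.tsum_eq_zero_add
    have h3 : ∑' i : ℕ, M ^ (i + 1) = M * ∑' i : ℕ, M ^ i := by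
      rw [← hs.tsum_mul_left]
      simp only [pow_succ']
    rw [h3, pow_zero] at h0
    rw [sub_mul, one_mul]
    exact sub_eq_iff_eq_add.2 h0
  have d1 := (Matrix.isUnit_iff_isUnit_det _).1 h1
  have d2 := (Matrix.isUnit_iff_isUnit_det _).1 h2
  have hM1 : 1 - M = (Aᵀ * A) * (Aᵀ * A + R)⁻¹ := by
    rw [hM, sub_eq_iff_eq_add, ← add_mul, Matrix.mul_nonsing_inv _ d2]
  have hkey : (Aᵀ * A)⁻¹ = (Aᵀ * A + R)⁻¹ * ∑' i : ℕ, M ^ i := by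
    rw [hM1, Matrix.mul_assoc] at hT
    exact Matrix.inv_eq_right_inv hT
  have heq : (Aᵀ * A)⁻¹ *ᵥ (Aᵀ *ᵥ b) -
        ((Aᵀ * A + R)⁻¹ * ∑ i ∈ Finset.range (k + 1), M ^ i) *ᵥ (Aᵀ *ᵥ b)
      = ((Aᵀ * A + R)⁻¹ * ∑' i : ℕ, M ^ (i + (k + 1))) *ᵥ (Aᵀ *ᵥ b) := by
    rw [hkey, ← Matrix.sub_mulVec, ← Matrix.mul_sub, ← hsum, add_sub_cancel_left]
  exact ⟨hs', heq, by rw [heq]⟩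
end

section
/- Let λ₁ ≥ λₙ > 0 be real numbers and let k ∈ ℕ. The function f(t) := (t/λₙ)·(1 − λₙ/t)^{k+1} + λ₁/t has strictly positive second derivative at every t > λₙ; in particular f is strictly convex on (λₙ, ∞). -/
theorem aux_u (l t : ℝ) (ht : t ≠ 0) :
    HasDerivAt (fun t : ℝ => 1 - l / t) (l / t ^ 2) t := by
  have h := ((hasDerivAt_inv ht).const_mul l).const_sub 1
  simp only [← div_eq_mul_inv] at h
  refine HasDerivAt.congr_deriv h ?_
  ring

theorem aux_first (a l : ℝ) (hl : 0 < l) (k : ℕ) (t : ℝ) (ht : t ≠ 0) :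
    HasDerivAt (fun t : ℝ => (t / l) * (1 - l / t) ^ (k + 1) + a / t)
      ((1 - l / t) ^ (k + 1) / l + (k + 1) * (1 - l / t) ^ k / t - a / t ^ 2) t := by
  have h := (((hasDerivAt_id t).div_const l).mul ((aux_u l t ht).pow (k + 1))).add
    ((hasDerivAt_inv ht).const_mul a)
  simp only [← div_eq_mul_inv] at h
  refine h.congr_deriv ?_
  simp only [Pi.pow_apply, id, Nat.add_sub_cancel]
  push_cast
  generalize 1 - l / t = u
  field_simp
  ring

theorem aux_second (a l : ℝ) (hl : 0 < l) (k : ℕ) (t : ℝ) (ht : t ≠ 0) :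
    HasDerivAt (fun t : ℝ =>
      (1 - l / t) ^ (k + 1) / l + (k + 1) * (1 - l / t) ^ k / t - a / t ^ 2)
      ((k + 1) * k * (1 - l / t) ^ (k - 1) * l / t ^ 3 + 2 * a / t ^ 3) t := by
  have hu := aux_u l t ht
  have h := (((hu.pow (k + 1)).div_const l).add
    (((hu.pow k).const_mul ((k : ℝ) + 1)).div (hasDerivAt_id t) ht)).sub
    ((hasDerivAt_const t a).div ((hasDerivAt_id t).pow 2) (pow_ne_zero 2 ht))
  refine h.congr_deriv ?_
  simp only [Pi.pow_apply, id, Nat.add_sub_cancel]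
  push_cast
  generalize 1 - l / t = u
  field_simp
  ring

/-- For `λ₁ ≥ λₙ > 0` and `k ∈ ℕ`, the loss
`f(t) = (t/λₙ)(1 − λₙ/t)^{k+1} + λ₁/t` has strictly positive second derivative at every
`t > λₙ`; in particular `f` is strictly convex on `(λₙ, ∞)`. -/
theorem stmt_18 (lam1 lamn : ℝ) (h1 : lamn ≤ lam1) (h2 : 0 < lamn) (k : ℕ) :
    (∀ t : ℝ, lamn < t →
      0 < iteratedDeriv 2
        (fun t : ℝ => (t / lamn) * (1 - lamn / t) ^ (k + 1) + lam1 / t) t) ∧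
    StrictConvexOn ℝ (Set.Ioi lamn)
      (fun t : ℝ => (t / lamn) * (1 - lamn / t) ^ (k + 1) + lam1 / t) := by
  have hpos : ∀ t : ℝ, lamn < t →
      0 < iteratedDeriv 2
        (fun t : ℝ => (t / lamn) * (1 - lamn / t) ^ (k + 1) + lam1 / t) t := by
    intro t ht
    have ht0 : 0 < t := h2.trans ht
    rw [iteratedDeriv_succ, iteratedDeriv_one]
    have he : deriv (fun t : ℝ => (t / lamn) * (1 - lamn / t) ^ (k + 1) + lam1 / t) =ᶠ[nhds t]
        (fun t : ℝ => (1 - lamn / t) ^ (k + 1) / lamn + (k + 1) * (1 - lamn / t) ^ k / t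
          - lam1 / t ^ 2) := by
      filter_upwards [isOpen_ne.mem_nhds ht0.ne'] with x hx
      exact (aux_first lam1 lamn h2 k x hx).deriv
    rw [he.deriv_eq, (aux_second lam1 lamn h2 k t ht0.ne').deriv]
    have hu : 0 < 1 - lamn / t := by
      rw [sub_pos, div_lt_one ht0]; exact ht
    have h3 : 0 < lam1 := h2.trans_le h1
    positivity
  refine ⟨hpos, ?_⟩
  apply strictConvexOn_of_deriv2_pos (convex_Ioi lamn)
  · intro t ht
    exact (aux_first lam1 lamn h2 k t (h2.trans ht).ne').continuousAt.continuousWithinAt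
  · intro t ht
    rw [interior_Ioi] at ht
    rw [← iteratedDeriv_eq_iterate]
    exact hpos t ht
end
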